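/- A function φ : 𝔻 → ℂ is analytic with sup_{λ∈𝔻} |φ(λ)| ≤ 1 if and only if there exist a complex Hilbert space H and a linear isometry V : ℂ ⊕ H → ℂ ⊕ H with block decomposition V(c,h) = (Ac + Bh, Cc·1 + Dh), where A ∈ ℂ, B : H → ℂ is a bounded linear functional, C ∈ H (acting as c ↦ cC), and D : H → H is a bounded linear operator, such that for every λ ∈ 𝔻 the operator I_H − λD is invertible and φ(λ) = A + λ B (I_H − λD)^{-1} C. -/

import Mathlib

open Complex Metric

/-!
If `|φ| ≤ 1` on the disc, then the Pick kernel `(1 - conj (φ w) φ z) / (1 - conj w z)` is positive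
semidefinite. For `φ` analytic up to the circle, put `f = ∑ c_w s_w` and `k = ∑ c_w φ(w) s_w`
with the conjugated Szegő kernels `s_w(z) = 1 / (1 - w conj z)`; by Cauchy's formula the Pick form
at `c` is the circle average of `(|f|² - |φ f|²) + |φ f - k|²`. Dilations `φ (r ·)` reduce the
general case to this one.

Factor the kernel as `⟪k_w, k_z⟫`. Then `1 + conj w z ⟪k_w, k_z⟫ = conj (φ w) φ z + ⟪k_w, k_z⟫`, so
`(1, z k_z) ↦ (φ z, k_z)` preserves inner products. It extends to an isometry `V` of all of `ℂ ⊕ H`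
because the vectors `(1, z k_z)` are total, and reading `V (1, z k_z) = (φ z, k_z)` in blocks and
solving for `k_z` gives the formula.

Conversely, `h = (1 - λ D)⁻¹ C` satisfies `V (1, λ h) = (φ λ, h)`, so that
`|φ λ|² = 1 - (1 - |λ|²) ‖h‖² ≤ 1`.
-/

section HilbertSpace

open Filter Submodule
open scoped Matrix Topology ComplexOrder InnerProductSpace

variable {𝕜 : Type*} [RCLike 𝕜]
  {E : Type*} [NormedAddCommGroup E] [InnerProductSpace 𝕜 E]
  {F : Type*} [NormedAddCommGroup F] [InnerProductSpace 𝕜 F]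

theorem dense_span_range_iff_forall_inner_eq_zero [CompleteSpace E] {ι : Type*} {u : ι → E} :
    Dense (span 𝕜 (Set.range u) : Set E) ↔ ∀ x : E, (∀ i, ⟪u i, x⟫_𝕜 = 0) → x = 0 := by
  rw [dense_iff_topologicalClosure_eq_top, topologicalClosure_eq_top_iff, Submodule.eq_bot_iff]
  refine forall_congr' fun x ↦ imp_congr_left ⟨fun hx i ↦ ?_, fun hx ↦ ?_⟩
  · exact hx _ (subset_span ⟨i, rfl⟩)
  · have le_ker : span 𝕜 (Set.range u) ≤ (𝕜 ∙ x)ᗮ :=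
      span_le.2 <| Set.range_subset_iff.2 fun i ↦ mem_orthogonal_singleton_iff_inner_left.2 (hx i)
    exact fun y hy ↦ mem_orthogonal_singleton_iff_inner_left.1 (le_ker hy)

theorem continuous_of_continuous_inner {X : Type*} [TopologicalSpace X] {k : X → E}
    (hk : Continuous fun p : X × X ↦ ⟪k p.1, k p.2⟫_𝕜) : Continuous k := by
  have continuous_inner {f g : X → X} (hf : Continuous f) (hg : Continuous g) :
      Continuous fun x ↦ ⟪k (f x), k (g x)⟫_𝕜 := hk.comp (hf.prodMk hg)
  refine continuous_iff_continuousAt.2 fun a ↦ tendsto_iff_norm_sub_tendsto_zero.2 ?_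
  have norm_sub_sq_eq (x : X) : ‖k x - k a‖ ^ 2 =
      RCLike.re (⟪k x, k x⟫_𝕜 - ⟪k x, k a⟫_𝕜 - ⟪k a, k x⟫_𝕜 + ⟪k a, k a⟫_𝕜) := by
    rw [← inner_sub_sub_self, inner_self_eq_norm_sq]
  have continuous_norm_sub_sq : Continuous fun x ↦ ‖k x - k a‖ ^ 2 := by
    simp only [norm_sub_sq_eq]
    exact RCLike.continuous_re.comp <| (((continuous_inner continuous_id continuous_id).sub
      (continuous_inner continuous_id continuous_const)).sub
      (continuous_inner continuous_const continuous_id)).add continuous_const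
  simpa using (continuous_norm_sub_sq.tendsto a).sqrt

theorem norm_linearCombination_eq_of_gram_eq {ι : Type*} {u : ι → E} {v : ι → F}
    (h : Matrix.gram 𝕜 u = Matrix.gram 𝕜 v) (c : ι →₀ 𝕜) :
    ‖Finsupp.linearCombination 𝕜 u c‖ = ‖Finsupp.linearCombination 𝕜 v c‖ := by
  have inner_eq (i j : ι) : ⟪u i, u j⟫_𝕜 = ⟪v i, v j⟫_𝕜 := congrFun₂ h i j
  simp only [norm_eq_sqrt_re_inner (𝕜 := 𝕜), Finsupp.linearCombination_apply, Finsupp.sum,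
    sum_inner, inner_sum, inner_smul_left, inner_smul_right, inner_eq]

theorem exists_linearIsometry_of_gram_eq [CompleteSpace F] {ι : Type*} {u : ι → E} {v : ι → F}
    (hgram : Matrix.gram 𝕜 u = Matrix.gram 𝕜 v) (hu : Dense (span 𝕜 (Set.range u) : Set E)) :
    ∃ V : E →ₗᵢ[𝕜] F, ∀ i, V (u i) = v i := by
  let lc_u := Finsupp.linearCombination 𝕜 u
  let lc_v := Finsupp.linearCombination 𝕜 v
  have norm_eq (c : ι →₀ 𝕜) : ‖lc_u c‖ = ‖lc_v c‖ := norm_linearCombination_eq_of_gram_eq hgram c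
  have dense_lc : DenseRange lc_u := by
    rwa [DenseRange, ← LinearMap.coe_range, Finsupp.range_linearCombination]
  let V : E →L[𝕜] F := lc_v.extendOfNorm lc_u
  have V_lc (c : ι →₀ 𝕜) : V (lc_u c) = lc_v c :=
    LinearMap.extendOfNorm_eq dense_lc ⟨1, fun c ↦ by rw [norm_eq, one_mul]⟩ c
  have norm_V (x : E) : ‖V x‖ = ‖x‖ :=
    dense_lc.induction (P := fun x ↦ ‖V x‖ = ‖x‖)
      (Set.forall_mem_range.2 fun c ↦ by rw [V_lc, norm_eq])
      (isClosed_eq (by fun_prop) (by fun_prop)) x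
  refine ⟨⟨V, norm_V⟩, fun i ↦ ?_⟩
  simpa [lc_u, lc_v] using V_lc (Finsupp.single i 1)

theorem posSemidef_of_isHermitian_of_re_nonneg {X : Type*} {K : Matrix X X 𝕜}
    (hK : K.IsHermitian)
    (hre : ∀ c : X →₀ 𝕜, 0 ≤ RCLike.re (c.sum fun x a ↦ c.sum fun y b ↦ star a * K x y * b)) :
    K.PosSemidef := by
  refine ⟨hK, fun c ↦ RCLike.nonneg_iff.2 ⟨hre c, RCLike.conj_eq_iff_im.1 ?_⟩⟩
  simp only [Finsupp.sum, map_sum, map_mul, RCLike.star_def, RCLike.conj_conj]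
  rw [Finset.sum_comm]
  refine Finset.sum_congr rfl fun x _ ↦ Finset.sum_congr rfl fun y _ ↦ ?_
  rw [starRingEnd_apply (K y x), hK.apply]
  ring

theorem posSemidef_of_tendsto {X ι : Type*} {l : Filter ι} [l.NeBot] {M : ι → Matrix X X 𝕜}
    {K : Matrix X X 𝕜} (hM : ∀ᶠ t in l, (M t).PosSemidef)
    (hlim : ∀ x y, Tendsto (fun t ↦ M t x y) l (𝓝 (K x y))) : K.PosSemidef := by
  have hlim_star (x y : X) : Tendsto (fun t ↦ star (M t y x)) l (𝓝 (star (K y x))) :=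
    (continuous_star.tendsto _).comp (hlim y x)
  refine ⟨Matrix.ext fun x y ↦ tendsto_nhds_unique_of_eventuallyEq (hlim_star x y) (hlim x y) ?_,
    fun c ↦ ge_of_tendsto (tendsto_finsetSum _ fun x _ ↦ tendsto_finsetSum _ fun y _ ↦
      ((hlim x y).const_mul _).mul_const _) ?_⟩
  · filter_upwards [hM] with t ht using ht.1.apply x y
  · filter_upwards [hM] with t ht using ht.2 c

theorem exists_gram_eq_of_posSemidef.{u, v} {𝕜 : Type u} [RCLike 𝕜] {X : Type v} {K : Matrix X X 𝕜}
    (hK : K.PosSemidef) :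
    ∃ (H : Type (max u v)) (_ : NormedAddCommGroup H) (_ : InnerProductSpace 𝕜 H)
      (_ : CompleteSpace H) (k : X → H),
      Matrix.gram 𝕜 k = K ∧ Dense (span 𝕜 (Set.range k) : Set H) := by
  let L : Matrix X X (𝕜 →L[𝕜] 𝕜) := K.map fun a ↦ a • 1
  have hL_herm : L.IsHermitian := hK.1.map _ fun a ↦ by simp
  have inner_L (x y : X) (a b : 𝕜) : ⟪L y x a, b⟫_𝕜 = star a * K x y * b := by
    simp [L, ← hK.1.apply x y, mul_comm]
  have hL_iff : L.PosSemidef ↔ L.IsHermitian ∧ ∀ c : X →₀ 𝕜,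
      0 ≤ RCLike.re (c.sum fun x a ↦ c.sum fun y b ↦ ⟪L y x a, b⟫_𝕜) :=
    RKHS.posSemidef_tfae.out 0 2
  have hL : L.PosSemidef := by
    simp only [hL_iff, inner_L]
    exact ⟨hL_herm, fun c ↦ (RCLike.nonneg_iff.1 (hK.2 c)).1⟩
  have : Fact L.PosSemidef := ⟨hL⟩
  refine ⟨RKHS.OfKernel L, inferInstance, inferInstance, inferInstance,
    fun x ↦ RKHS.kerFun (RKHS.OfKernel L) x 1, Matrix.ext fun x y ↦ ?_,
    dense_span_range_iff_forall_inner_eq_zero.2 fun h hh ↦ RKHS.ext fun x ↦ ?_⟩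
  · rw [Matrix.gram_apply, ← RKHS.kernel_inner, RKHS.OfKernel.kernel_ofKernel, inner_L]
    simp
  · simpa using hh x

end HilbertSpace

section Pick

open Filter
open scoped Matrix Topology ComplexOrder UnitDisc

theorem one_sub_star_mul_ne_zero {a z : ℂ} (ha : ‖a‖ < 1) (hz : ‖z‖ ≤ 1) :
    1 - star a * z ≠ 0 := by
  intro h
  have norm_eq_one : ‖a‖ * ‖z‖ = 1 := by
    rw [← norm_star a, ← norm_mul, ← sub_eq_zero.1 h, norm_one]
  nlinarith [norm_nonneg a]

theorem star_div_sub_of_norm_eq_one {z : ℂ} (hz : ‖z‖ = 1) (a : ℂ) :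
    star (z / (z - a)) = 1 / (1 - star a * z) := by
  have hz0 : z ≠ 0 := norm_ne_zero_iff.1 (hz ▸ one_ne_zero)
  have star_z : star z = z⁻¹ := by
    rw [Complex.inv_def, normSq_eq_norm_sq, hz]
    simp
  rw [star_div₀, star_sub, star_z, ← mul_div_mul_left _ _ hz0, mul_sub, mul_inv_cancel₀ hz0,
    mul_comm z]

theorem circleAverage_star_div_sub_mul {F : ℂ → ℂ} (hF : DiffContOnCl ℂ F (ball 0 1)) {a w : ℂ}
    (ha : ‖a‖ < 1) (hw : ‖w‖ < 1) :
    Real.circleAverage (fun z ↦ star (z / (z - a)) * (F z * (z / (z - w)))) 0 1 =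
      F w / (1 - star a * w) := by
  have hG : DiffContOnCl ℂ (fun z ↦ F z / (1 - star a * z)) (ball 0 |1|) := by
    rw [abs_one]
    have hden : DiffContOnCl ℂ (fun z ↦ 1 - star a * z) (ball 0 1) :=
      Differentiable.diffContOnCl (by fun_prop)
    have hden_ne_zero (z : ℂ) (hz : z ∈ closure (ball 0 1)) : 1 - star a * z ≠ 0 :=
      one_sub_star_mul_ne_zero ha (mem_closedBall_zero_iff.1 (closure_ball_subset_closedBall hz))
    simpa only [div_eq_inv_mul, Pi.inv_apply, smul_eq_mul] using (hden.inv hden_ne_zero).smul hF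
  have heq : Set.EqOn (fun z ↦ star (z / (z - a)) * (F z * (z / (z - w))))
      (fun z ↦ ((z - 0) / (z - w)) • (F z / (1 - star a * z))) (sphere 0 |1|) := fun z hz ↦ by
    have hz1 : ‖z‖ = 1 := by simpa using hz
    simp only [star_div_sub_of_norm_eq_one hz1, smul_eq_mul, sub_zero]
    ring
  rw [Real.circleAverage_congr_sphere heq, hG.circleAverage_smul_div (by simpa using hw)]

/-- A linear combination of the conjugated Szegő kernels `z ↦ 1 / (1 - w conj z)`. They are written
as `z / (z - w)`, the factor in Cauchy's formula, with which they agree on the unit circle. -/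
noncomputable def szegoSum (s : Finset 𝔻) (b : 𝔻 → ℂ) (z : ℂ) : ℂ :=
  ∑ w ∈ s, b w * (z / (z - w))

theorem continuousOn_div_sub_sphere (w : 𝔻) :
    ContinuousOn (fun z : ℂ ↦ z / (z - w)) (sphere 0 1) := by
  refine continuousOn_id.div (by fun_prop) fun z hz ↦ sub_ne_zero.2 ?_
  rintro rfl
  exact w.norm_ne_one (mem_sphere_zero_iff_norm.1 hz)

theorem continuousOn_szegoSum (s : Finset 𝔻) (b : 𝔻 → ℂ) :
    ContinuousOn (szegoSum s b) (sphere 0 1) :=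
  continuousOn_finsetSum _ fun w _ ↦ continuousOn_const.mul (continuousOn_div_sub_sphere w)

theorem circleIntegrable_star_szegoSum_mul {F : ℂ → ℂ} (hF : ContinuousOn F (sphere 0 1))
    (s : Finset 𝔻) (a b : 𝔻 → ℂ) :
    CircleIntegrable (fun z ↦ star (szegoSum s a z) * (F z * szegoSum s b z)) 0 1 :=
  ((continuousOn_szegoSum s a).star.mul
    (hF.mul (continuousOn_szegoSum s b))).circleIntegrable zero_le_one

theorem circleAverage_star_szegoSum_mul {F : ℂ → ℂ} (hF : DiffContOnCl ℂ F (ball 0 1))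
    (s : Finset 𝔻) (a b : 𝔻 → ℂ) :
    Real.circleAverage (fun z ↦ star (szegoSum s a z) * (F z * szegoSum s b z)) 0 1 =
      ∑ v ∈ s, ∑ w ∈ s, star (a v) * b w * (F w / (1 - star (v : ℂ) * w)) := by
  have hF_sphere : ContinuousOn F (sphere 0 1) :=
    hF.continuousOn_ball.mono sphere_subset_closedBall
  let term (v w : 𝔻) (z : ℂ) : ℂ := star (a v) * b w * (star (z / (z - v)) * (F z * (z / (z - w))))
  have expand (z : ℂ) : star (szegoSum s a z) * (F z * szegoSum s b z) =
      ∑ v ∈ s, ∑ w ∈ s, term v w z := by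
    simp only [szegoSum, star_sum, Finset.mul_sum, Finset.sum_mul, star_mul', term]
    rw [Finset.sum_comm]
    exact Finset.sum_congr rfl fun v _ ↦ Finset.sum_congr rfl fun w _ ↦ by ring
  have integrable_term (v w : 𝔻) : CircleIntegrable (term v w) 0 1 :=
    (continuousOn_const.mul ((continuousOn_div_sub_sphere v).star.mul
      (hF_sphere.mul (continuousOn_div_sub_sphere w)))).circleIntegrable zero_le_one
  simp only [expand]
  rw [Real.circleAverage_fun_sum fun v _ ↦ CircleIntegrable.fun_sum _ fun w _ ↦ integrable_term v w]
  refine Finset.sum_congr rfl fun v _ ↦ ?_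
  rw [Real.circleAverage_fun_sum fun w _ ↦ integrable_term v w]
  refine Finset.sum_congr rfl fun w _ ↦ ?_
  rw [← circleAverage_star_div_sub_mul hF v.norm_lt_one w.norm_lt_one]
  exact Real.circleAverage_fun_smul (𝕜 := ℂ)

/-- The Pick (de Branges–Rovnyak) kernel of `φ`, as a matrix indexed by the points of the disc. The
row index is the conjugated variable, as in `Matrix.gram`. -/
noncomputable def pickMatrix (φ : ℂ → ℂ) : Matrix 𝔻 𝔻 ℂ :=
  .of fun w z ↦ (1 - star (φ w) * φ z) / (1 - star (w : ℂ) * z)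

theorem pickMatrix_apply (φ : ℂ → ℂ) (w z : 𝔻) :
    pickMatrix φ w z = (1 - star (φ w) * φ z) / (1 - star (w : ℂ) * z) := rfl

theorem isHermitian_pickMatrix (φ : ℂ → ℂ) : (pickMatrix φ).IsHermitian :=
  Matrix.ext fun w z ↦ by simp [pickMatrix_apply, mul_comm]

theorem continuous_pickMatrix {φ : ℂ → ℂ} (hφ : ContinuousOn φ (ball 0 1)) :
    Continuous fun p : 𝔻 × 𝔻 ↦ pickMatrix φ p.1 p.2 := by
  have hφ_coe : Continuous fun z : 𝔻 ↦ φ z :=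
    hφ.comp_continuous UnitDisc.continuous_coe fun z ↦ mem_ball_zero_iff.2 z.norm_lt_one
  simp only [pickMatrix_apply]
  refine Continuous.div ?_ (by fun_prop) fun p ↦
    one_sub_star_mul_ne_zero p.1.norm_lt_one p.2.norm_lt_one.le
  exact continuous_const.sub ((hφ_coe.comp continuous_fst).star.mul (hφ_coe.comp continuous_snd))

theorem re_star_mul_add_star_mul_sub_nonneg {g : ℂ} (hg : ‖g‖ ≤ 1) (f k : ℂ) :
    0 ≤ (star f * f + star k * k - star k * (2 * g * f)).re := by
  have sum_of_squares : (star f * f + star k * k - star k * (2 * g * f)).re =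
      (‖f‖ ^ 2 - ‖g * f‖ ^ 2) + ‖g * f - k‖ ^ 2 := by
    simp only [← normSq_eq_norm_sq, normSq_apply, star_def, add_re, sub_re, mul_re, mul_im, sub_im,
      conj_re, conj_im, re_ofNat, im_ofNat]
    ring
  have norm_mul_le : ‖g * f‖ ≤ ‖f‖ := by
    rw [norm_mul]
    exact mul_le_of_le_one_left (norm_nonneg f) hg
  rw [sum_of_squares]
  exact add_nonneg (sub_nonneg.2 (by gcongr)) (sq_nonneg _)

/-- With `f = szegoSum s c` and `k = szegoSum s (c g)`, the function `|f|² + |k|² - 2 conj k g f`,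
whose circle average is the Pick form of `g` at `c` and whose real part is
`|f|² - |g f|² + |g f - k|²`. -/
noncomputable def pickIntegrand (g : ℂ → ℂ) (s : Finset 𝔻) (c : 𝔻 → ℂ) : ℂ → ℂ := fun z ↦
  star (szegoSum s c z) * szegoSum s c z +
    star (szegoSum s (fun w ↦ c w * g w) z) * szegoSum s (fun w ↦ c w * g w) z -
    star (szegoSum s (fun w ↦ c w * g w) z) * (2 * g z * szegoSum s c z)

theorem circleIntegrable_pickIntegrand {g : ℂ → ℂ} (hg : ContinuousOn g (sphere 0 1))
    (s : Finset 𝔻) (c : 𝔻 → ℂ) : CircleIntegrable (pickIntegrand g s c) 0 1 := by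
  have hf := continuousOn_szegoSum s c
  have hk := continuousOn_szegoSum s fun w ↦ c w * g w
  exact (((hf.star.mul hf).add (hk.star.mul hk)).sub
    (hk.star.mul ((continuousOn_const.mul hg).mul hf))).circleIntegrable zero_le_one

theorem circleAverage_pickIntegrand {g : ℂ → ℂ} (hg : DiffContOnCl ℂ g (ball 0 1))
    (s : Finset 𝔻) (c : 𝔻 → ℂ) :
    Real.circleAverage (pickIntegrand g s c) 0 1 =
      ∑ w ∈ s, ∑ z ∈ s, star (c w) * pickMatrix g w z * c z := by
  have hg2 : DiffContOnCl ℂ (fun z ↦ 2 * g z) (ball 0 1) := hg.const_smul (2 : ℂ)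
  have integrable_one (a b : 𝔻 → ℂ) := circleIntegrable_star_szegoSum_mul
    (F := fun _ ↦ 1) continuousOn_const s a b
  have average_one (a b : 𝔻 → ℂ) := circleAverage_star_szegoSum_mul
    (F := fun _ ↦ 1) diffContOnCl_const s a b
  simp only [one_mul] at integrable_one average_one
  have integrable_g := circleIntegrable_star_szegoSum_mul
    (hg2.continuousOn_ball.mono sphere_subset_closedBall) s (fun w ↦ c w * g w) c
  unfold pickIntegrand
  rw [Real.circleAverage_fun_sub ((integrable_one _ _).fun_add (integrable_one _ _)) integrable_g,
    Real.circleAverage_fun_add (integrable_one _ _) (integrable_one _ _), average_one,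
    average_one, circleAverage_star_szegoSum_mul hg2]
  simp only [← Finset.sum_add_distrib, ← Finset.sum_sub_distrib, pickMatrix_apply, star_mul']
  refine Finset.sum_congr rfl fun w _ ↦ Finset.sum_congr rfl fun z _ ↦ ?_
  ring

theorem posSemidef_pickMatrix_of_diffContOnCl {g : ℂ → ℂ} (hg : DiffContOnCl ℂ g (ball 0 1))
    (hbound : ∀ z ∈ sphere (0 : ℂ) 1, ‖g z‖ ≤ 1) : (pickMatrix g).PosSemidef := by
  refine posSemidef_of_isHermitian_of_re_nonneg (isHermitian_pickMatrix g) fun c ↦ ?_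
  have hg_sphere : ContinuousOn g (sphere 0 1) :=
    hg.continuousOn_ball.mono sphere_subset_closedBall
  have re_average : Real.circleAverage (fun z ↦ (pickIntegrand g c.support c z).re) 0 1 =
      (Real.circleAverage (pickIntegrand g c.support c) 0 1).re :=
    reCLM.circleAverage_comp_comm (circleIntegrable_pickIntegrand hg_sphere c.support c)
  simp only [Finsupp.sum, RCLike.re_eq_complex_re]
  rw [← circleAverage_pickIntegrand hg, ← re_average]
  refine Real.circleAverage_nonneg_of_nonneg fun z hz ↦ ?_
  exact re_star_mul_add_star_mul_sub_nonneg (hbound z (by simpa using hz)) _ _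

theorem posSemidef_pickMatrix {φ : ℂ → ℂ} (hφ : DifferentiableOn ℂ φ (ball 0 1))
    (hbound : ∀ z ∈ ball (0 : ℂ) 1, ‖φ z‖ ≤ 1) : (pickMatrix φ).PosSemidef := by
  have smul_mem_ball {r : ℝ} (hr : r ∈ Set.Ioo 0 1) :
      Set.MapsTo (fun z : ℂ ↦ r * z) (closedBall 0 1) (ball 0 1) := fun z hz ↦ by
    rw [mem_closedBall_zero_iff] at hz
    rw [mem_ball_zero_iff, norm_mul, norm_real, Real.norm_of_nonneg hr.1.le]
    exact mul_lt_one_of_nonneg_of_lt_one_left hr.1.le hr.2 hz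
  have tendsto_dilation (w : 𝔻) : Tendsto (fun r : ℝ ↦ φ (r * w)) (𝓝[<] 1) (𝓝 (φ w)) := by
    have hφw : ContinuousAt φ w :=
      hφ.continuousOn.continuousAt (isOpen_ball.mem_nhds (mem_ball_zero_iff.2 w.norm_lt_one))
    have hr : Tendsto (fun r : ℝ ↦ (r : ℂ) * w) (𝓝 1) (𝓝 w) :=
      Continuous.tendsto' (by fun_prop) _ _ (by simp)
    exact hφw.tendsto.comp (hr.mono_left nhdsWithin_le_nhds)
  refine posSemidef_of_tendsto (l := 𝓝[<] (1 : ℝ)) (M := fun r ↦ pickMatrix fun z ↦ φ (r * z)) ?_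
    fun w z ↦ ?_
  · filter_upwards [Ioo_mem_nhdsLT (zero_lt_one' ℝ)] with r hr
    refine posSemidef_pickMatrix_of_diffContOnCl (DifferentiableOn.diffContOnCl ?_) fun z hz ↦
      hbound _ (smul_mem_ball hr (sphere_subset_closedBall hz))
    exact (hφ.comp (by fun_prop) (smul_mem_ball hr)).mono closure_ball_subset_closedBall
  · exact ((((continuous_star.tendsto _).comp (tendsto_dilation w)).mul
      (tendsto_dilation z)).const_sub 1).div_const _

end Pick

section TransferFunction

theorem isUnit_one_sub_smul {𝕜 R : Type*} [NormedField 𝕜] [NormedRing R] [NormedAlgebra 𝕜 R]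
    [HasSummableGeomSeries R] {a : 𝕜} {x : R} (ha : ‖a‖ < 1) (hx : ‖x‖ ≤ 1) :
    IsUnit (1 - a • x) := by
  refine isUnit_one_sub_of_norm_lt_one ?_
  rw [norm_smul]
  exact mul_lt_one_of_nonneg_of_lt_one_left (norm_nonneg a) ha hx

variable {𝕜 : Type*} [NontriviallyNormedField 𝕜] {H : Type*} [NormedAddCommGroup H]
  [NormedSpace 𝕜 H]

/-- The transfer function `λ ↦ A + λ B (1 - λ D)⁻¹ C` of the operator
`(c, h) ↦ (A c + B h, c C + D h)` on `𝕜 ⊕ H`. Where `1 - λ D` is not invertible, `Ring.inverse`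
makes it the junk value `A`. -/
noncomputable def transferFunction (A : 𝕜) (B : H →L[𝕜] 𝕜) (C : H) (D : H →L[𝕜] H)
    (lam : 𝕜) : 𝕜 :=
  A + lam * B (Ring.inverse (1 - lam • D) C)

variable {A : 𝕜} {B : H →L[𝕜] 𝕜} {C : H} {D : H →L[𝕜] H} {lam : 𝕜}

theorem inverse_one_sub_smul_apply_eq_iff (hu : IsUnit (1 - lam • D)) {x : H} :
    Ring.inverse (1 - lam • D) C = x ↔ C + lam • D x = x := by
  have apply_eq : (1 - lam • D) x = x - lam • D x := rfl
  rw [← eq_sub_iff_add_eq, ← apply_eq]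
  constructor
  · rintro rfl
    rw [← mul_apply_eq_comp, Ring.mul_inverse_cancel _ hu, one_apply_eq_self]
  · rintro rfl
    rw [← mul_apply_eq_comp, Ring.inverse_mul_cancel _ hu, one_apply_eq_self]

theorem differentiableAt_transferFunction [CompleteSpace H] (hu : IsUnit (1 - lam • D)) :
    DifferentiableAt 𝕜 (transferFunction A B C D) lam := by
  have hinv : DifferentiableAt 𝕜 (fun l : 𝕜 ↦ Ring.inverse (1 - l • D)) lam :=
    DifferentiableAt.comp (f := fun l : 𝕜 ↦ 1 - l • D) lam (differentiableAt_inverse hu)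
      (by fun_prop)
  have hinv_apply : DifferentiableAt 𝕜 (fun l : 𝕜 ↦ Ring.inverse (1 - l • D) C) lam :=
    hinv.clm_apply (differentiableAt_const C)
  exact (differentiableAt_id.mul (B.differentiableAt.comp lam hinv_apply)).const_add A

theorem norm_le_one_of_contractive
    (hV : ∀ c h, ‖A * c + B h‖ ^ 2 + ‖c • C + D h‖ ^ 2 ≤ ‖c‖ ^ 2 + ‖h‖ ^ 2) : ‖D‖ ≤ 1 := by
  refine D.opNorm_le_bound zero_le_one fun h ↦ ?_
  have norm_sq_le : ‖B h‖ ^ 2 + ‖D h‖ ^ 2 ≤ ‖h‖ ^ 2 := by simpa using hV 0 h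
  rw [one_mul]
  exact le_of_sq_le_sq (le_of_add_le_of_nonneg_right norm_sq_le (sq_nonneg _)) (norm_nonneg h)

theorem norm_transferFunction_le_one
    (hV : ∀ c h, ‖A * c + B h‖ ^ 2 + ‖c • C + D h‖ ^ 2 ≤ ‖c‖ ^ 2 + ‖h‖ ^ 2)
    (hu : IsUnit (1 - lam • D)) (hlam : ‖lam‖ ≤ 1) : ‖transferFunction A B C D lam‖ ≤ 1 := by
  rw [transferFunction]
  set h := Ring.inverse (1 - lam • D) C with h_def
  have resolvent_eq : C + lam • D h = h := (inverse_one_sub_smul_apply_eq_iff hu).1 h_def.symm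
  have energy_le : ‖A + lam * B h‖ ^ 2 + ‖h‖ ^ 2 ≤ 1 + ‖lam • h‖ ^ 2 := by
    simpa [resolvent_eq] using hV 1 (lam • h)
  have norm_smul_le : ‖lam • h‖ ^ 2 ≤ ‖h‖ ^ 2 := by
    rw [norm_smul]
    gcongr
    exact mul_le_of_le_one_left (norm_nonneg h) hlam
  exact (sq_le_one_iff₀ (norm_nonneg _)).1 (by linarith)

end TransferFunction

section Colligation

open scoped Matrix ComplexOrder UnitDisc InnerProductSpace

theorem exists_block_decomposition {𝕜 : Type*} [NontriviallyNormedField 𝕜] {H : Type*}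
    [NormedAddCommGroup H] [NormedSpace 𝕜 H] (V : WithLp 2 (𝕜 × H) →L[𝕜] WithLp 2 (𝕜 × H)) :
    ∃ (A : 𝕜) (B : H →L[𝕜] 𝕜) (C : H) (D : H →L[𝕜] H),
      ∀ c h, V (.toLp 2 (c, h)) = .toLp 2 (A * c + B h, c • C + D h) := by
  let e := WithLp.prodContinuousLinearEquiv 2 𝕜 𝕜 H
  let W : 𝕜 × H →L[𝕜] 𝕜 × H := e ∘L V ∘L e.symm
  have W_apply (c : 𝕜) (h : H) : W (c, h) = c • W (1, 0) + W (0, h) := by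
    rw [← map_smul, ← map_add]
    simp
  refine ⟨(W (1, 0)).1, .fst 𝕜 𝕜 H ∘L W ∘L .inr 𝕜 𝕜 H, (W (1, 0)).2,
    .snd 𝕜 𝕜 H ∘L W ∘L .inr 𝕜 𝕜 H, fun c h ↦ ?_⟩
  refine congrArg (WithLp.toLp 2) (?_ : W (c, h) = _)
  rw [W_apply]
  exact Prod.ext (by simp [mul_comm c]) (by simp)

theorem dense_span_range_toLp_one_smul {𝕜 : Type*} [RCLike 𝕜] {H : Type*} [NormedAddCommGroup H]
    [InnerProductSpace 𝕜 H] [CompleteSpace H] {X : Type*} [TopologicalSpace X] {a : X → 𝕜}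
    {k : X → H} (hk : Continuous k) (hk_dense : Dense (Submodule.span 𝕜 (Set.range k) : Set H))
    (ha : Dense {x | a x ≠ 0}) {x₀ : X} (hx₀ : a x₀ = 0) :
    Dense (Submodule.span 𝕜 (Set.range fun x ↦ WithLp.toLp 2 ((1 : 𝕜), a x • k x)) :
      Set (WithLp 2 (𝕜 × H))) := by
  refine dense_span_range_iff_forall_inner_eq_zero.2 fun p hp ↦ ?_
  obtain ⟨c, h⟩ := p
  have inner_eq (x : X) : c + star (a x) * ⟪k x, h⟫_𝕜 = 0 := by
    simpa [WithLp.prod_inner_apply, inner_smul_left] using hp x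
  have hc : c = 0 := by simpa [hx₀] using inner_eq x₀
  have closed : IsClosed {x | ⟪k x, h⟫_𝕜 = 0} := isClosed_eq (by fun_prop) continuous_const
  have hh : h = 0 := by
    refine dense_span_range_iff_forall_inner_eq_zero.1 hk_dense h fun x ↦ ?_
    refine closed.closure_subset_iff.2 (fun y hy ↦ ?_) (ha x)
    simpa [hc, show a y ≠ 0 from hy] using inner_eq y
  rw [hc, hh]
  rfl

theorem dense_setOf_coe_unitDisc_ne_zero : Dense {z : 𝔻 | (z : ℂ) ≠ 0} :=
  (dense_compl_singleton (0 : ℂ)).preimage isOpen_ball.isOpenMap_subtype_val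

theorem gram_toLp_one_smul_eq {φ : ℂ → ℂ} {H : Type*} [NormedAddCommGroup H]
    [InnerProductSpace ℂ H] {k : 𝔻 → H} (hk : Matrix.gram ℂ k = pickMatrix φ) :
    Matrix.gram ℂ (fun z : 𝔻 ↦ WithLp.toLp 2 ((1 : ℂ), (z : ℂ) • k z)) =
      Matrix.gram ℂ (fun z : 𝔻 ↦ WithLp.toLp 2 (φ z, k z)) := by
  ext w z
  have inner_eq : ⟪k w, k z⟫_ℂ = pickMatrix φ w z := congrFun₂ hk w z
  have mul_inner : (1 - star (w : ℂ) * z) * ⟪k w, k z⟫_ℂ = 1 - star (φ w) * φ z := by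
    rw [inner_eq, pickMatrix_apply]
    exact mul_div_cancel₀ _ (one_sub_star_mul_ne_zero w.norm_lt_one z.norm_lt_one.le)
  simp only [Matrix.gram_apply, WithLp.prod_inner_apply, inner_smul_left, inner_smul_right,
    RCLike.inner_apply, starRingEnd_apply, star_one]
  linear_combination -mul_inner

theorem exists_isometric_realization {φ : ℂ → ℂ} (hφ : ContinuousOn φ (ball 0 1))
    (hpos : (pickMatrix φ).PosSemidef) :
    ∃ (H : Type) (_ : NormedAddCommGroup H) (_ : InnerProductSpace ℂ H) (_ : CompleteSpace H)
      (A : ℂ) (B : H →L[ℂ] ℂ) (C : H) (D : H →L[ℂ] H),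
      (∀ (c : ℂ) (h : H), ‖A * c + B h‖ ^ 2 + ‖c • C + D h‖ ^ 2 = ‖c‖ ^ 2 + ‖h‖ ^ 2) ∧
      ∀ lam ∈ ball (0 : ℂ) 1, φ lam = transferFunction A B C D lam := by
  obtain ⟨H, _, _, _, k, hgram, hdense⟩ := exists_gram_eq_of_posSemidef hpos
  have hk : Continuous k := continuous_of_continuous_inner (hgram ▸ continuous_pickMatrix hφ)
  obtain ⟨V, hV⟩ := exists_linearIsometry_of_gram_eq (gram_toLp_one_smul_eq hgram)
    (dense_span_range_toLp_one_smul hk hdense dense_setOf_coe_unitDisc_ne_zero UnitDisc.coe_zero)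
  obtain ⟨A, B, C, D, hblock⟩ := exists_block_decomposition V.toContinuousLinearMap
  have isometric (c : ℂ) (h : H) :
      ‖A * c + B h‖ ^ 2 + ‖c • C + D h‖ ^ 2 = ‖c‖ ^ 2 + ‖h‖ ^ 2 := by
    have norm_V : ‖V.toContinuousLinearMap (.toLp 2 (c, h))‖ = ‖WithLp.toLp 2 (c, h)‖ :=
      V.norm_map (.toLp 2 (c, h))
    rw [hblock, ← sq_eq_sq₀ (norm_nonneg _) (norm_nonneg _)] at norm_V
    simpa [WithLp.prod_norm_sq_eq_of_L2] using norm_V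
  refine ⟨H, inferInstance, inferInstance, inferInstance, A, B, C, D, isometric, fun lam hlam ↦ ?_⟩
  have norm_lam : ‖lam‖ < 1 := mem_ball_zero_iff.1 hlam
  let z : 𝔻 := .mk lam norm_lam
  have V_eq : (WithLp.toLp 2 (A * 1 + B (lam • k z), (1 : ℂ) • C + D (lam • k z))) =
      WithLp.toLp 2 (φ lam, k z) := (hblock 1 (lam • k z)).symm.trans (hV z)
  obtain ⟨hφ_eq, hk_eq⟩ := Prod.ext_iff.1 (WithLp.toLp_injective 2 V_eq)
  simp only [mul_one, one_smul, map_smul, smul_eq_mul] at hφ_eq hk_eq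
  have hu := isUnit_one_sub_smul norm_lam (norm_le_one_of_contractive fun c h ↦ (isometric c h).le)
  rw [transferFunction, (inverse_one_sub_smul_apply_eq_iff hu).2 hk_eq, hφ_eq]

end Colligation

/-- **Realization formula on the disk.** A function `φ : 𝔻 → ℂ` is analytic with
`sup_{λ ∈ 𝔻} |φ(λ)| ≤ 1` if and only if there are a complex Hilbert space `H` and an
isometry `V : ℂ ⊕ H → ℂ ⊕ H` with block decomposition `V(c, h) = (A c + B h, c • C + D h)`
such that for every `λ ∈ 𝔻` the operator `I_H - λ D` is invertible and
`φ(λ) = A + λ B (I_H - λ D)⁻¹ C`. -/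
theorem realization_formula_disk (φ : ℂ → ℂ) :
    (DifferentiableOn ℂ φ (ball (0 : ℂ) 1) ∧ ∀ lam ∈ ball (0 : ℂ) 1, ‖φ lam‖ ≤ 1) ↔
    ∃ (H : Type) (_ : NormedAddCommGroup H) (_ : InnerProductSpace ℂ H) (_ : CompleteSpace H)
      (A : ℂ) (B : H →L[ℂ] ℂ) (C : H) (D : H →L[ℂ] H),
      -- `V(c, h) = (A * c + B h, c • C + D h)` is an isometry of `ℂ ⊕ H`
      (∀ (c : ℂ) (h : H),
        ‖A * c + B h‖ ^ 2 + ‖c • C + D h‖ ^ 2 = ‖c‖ ^ 2 + ‖h‖ ^ 2) ∧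
      ∀ lam ∈ ball (0 : ℂ) 1,
        IsUnit (1 - lam • D) ∧
        φ lam = A + lam * B ((Ring.inverse (1 - lam • D)) C) := by
  constructor
  · rintro ⟨hφ, hbound⟩
    obtain ⟨H, _, _, _, A, B, C, D, hV, hreal⟩ :=
      exists_isometric_realization hφ.continuousOn (posSemidef_pickMatrix hφ hbound)
    have hD : ‖D‖ ≤ 1 := norm_le_one_of_contractive fun c h ↦ (hV c h).le
    exact ⟨H, inferInstance, inferInstance, inferInstance, A, B, C, D, hV, fun lam hlam ↦
      ⟨isUnit_one_sub_smul (mem_ball_zero_iff.1 hlam) hD, hreal lam hlam⟩⟩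
  · rintro ⟨H, _, _, _, A, B, C, D, hV, hreal⟩
    have hφ : Set.EqOn φ (transferFunction A B C D) (ball 0 1) := fun lam hlam ↦ (hreal lam hlam).2
    refine ⟨DifferentiableOn.congr (fun lam hlam ↦ ?_) hφ, fun lam hlam ↦ ?_⟩
    · exact (differentiableAt_transferFunction (hreal lam hlam).1).differentiableWithinAt
    · rw [hφ hlam]
      exact norm_transferFunction_le_one (fun c h ↦ (hV c h).le) (hreal lam hlam).1
        (mem_ball_zero_iff.1 hlam).le
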